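/- Fix m ≥ 2 and a hierarchy S of size m, let H^{(m)}_n denote the number of isomorphism classes of hierarchies of size n containing no subhierarchy isomorphic to S, let H^{(m)}(x) = Σ_{n≥1} H^{(m)}_n xⁿ (as a function on its interval of convergence), and let ρ_m be its radius of convergence. Then exp( Σ_{k=1}^∞ (1/k) H^{(m)}(ρ_m^k) ) = 2, where H^{(m)}(ρ_m) denotes the convergent sum Σ_{n≥1} H^{(m)}_n ρ_mⁿ. -/

import Mathlib

/-- Finite rooted unordered trees, presented with an ordered list of children
(unorderedness is taken care of by the isomorphism relation `RTree.Iso`). -/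
inductive RTree : Type
  | node : List RTree → RTree

/-- The number of leaves (external vertices) of a rooted tree: the *size* of a hierarchy. -/
def RTree.leaves : RTree → ℕ
  | .node [] => 1
  | .node (a :: l) => ((a :: l).attach.map (fun x => RTree.leaves x.1)).sum
decreasing_by
  have := List.sizeOf_lt_of_mem x.2
  simp only [RTree.node.sizeOf_spec]
  omega

/-- A hierarchy: a rooted tree in which no vertex has exactly one child. -/
inductive RTree.IsHierarchy : RTree → Prop
  | node {l : List RTree} : l.length ≠ 1 → (∀ t ∈ l, RTree.IsHierarchy t) →
      RTree.IsHierarchy (.node l)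

/-- `s.SubtreeOf t` : `s` is the subtree of `t` rooted at some vertex of `t`
(that vertex together with all of its descendants). -/
inductive RTree.SubtreeOf : RTree → RTree → Prop
  | refl (t : RTree) : RTree.SubtreeOf t t
  | child {s c : RTree} {l : List RTree} : c ∈ l → RTree.SubtreeOf s c →
      RTree.SubtreeOf s (.node l)

/-- Isomorphism of rooted unordered trees: the children of the two roots can be
matched up bijectively by isomorphisms. -/
inductive RTree.Iso : RTree → RTree → Prop
  | node {l₁ l l₂ : List RTree} (h₁ : List.Forall₂ RTree.Iso l₁ l) (h₂ : l.Perm l₂) :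
      RTree.Iso (.node l₁) (.node l₂)

/-- The number of isomorphism classes of hierarchies of size `n` (OEIS A000669). -/
noncomputable def hierarchyCount (n : ℕ) : ℕ :=
  Nat.card (Quot fun a b : {t : RTree // t.IsHierarchy ∧ t.leaves = n} => RTree.Iso a.1 b.1)

/-- `t` contains no subhierarchy isomorphic to `S`. -/
def RTree.Avoids (t S : RTree) : Prop :=
  ∀ s : RTree, s.SubtreeOf t → ¬ RTree.Iso s S

/-- The number of isomorphism classes of hierarchies of size `n` containing
no subhierarchy isomorphic to `S`. -/
noncomputable def avoidCount (S : RTree) (n : ℕ) : ℕ :=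
  Nat.card (Quot fun a b : {t : RTree // t.IsHierarchy ∧ t.leaves = n ∧ t.Avoids S} =>
    RTree.Iso a.1 b.1)

/-- The radius of convergence of the real power series `∑ₙ aₙ xⁿ`. -/
noncomputable def radiusOf (a : ℕ → ℝ) : ENNReal :=
  (FormalMultilinearSeries.ofScalars ℝ a).radius

/-!
Let `A` be the set of isomorphism classes of hierarchies avoiding `S`, `H x = ∑ a, x ^ |a|`, and
`T x = ∑ k, H (x ^ k) / k = -∑ a, log (1 - x ^ |a|)`, the logarithm of the generating function of
multisets over `A`. Passing to the children of the root identifies `A ∪ {S}` with the multisets over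
`A` of cardinality different from `1`, which gives `exp (T x) + x = 2 * H x + x ^ m + 1`.
Writing `T = H + R`, this becomes `2 * T - exp T + 1 = 2 * R x + x - x ^ m`. By strict convexity the
left-hand side is at most `2 * log 2 - 1`, with equality only for `T = log 2`.

The right-hand side increases strictly with `x` as long as `H x` converges, so by the intermediate
value theorem `T ≤ log 2` there; hence `H` still converges at the radius of convergence `ρ`.
If `T ρ < log 2`, then slightly beyond `ρ` the right-hand side, in which only the values `H (x ^ k)`
with `k ≥ 2` occur, is still less than `2 * log 2 - 1`. This keeps the partial sums of `H` over
`|a| ≤ N` bounded, so `H` converges beyond `ρ`, a contradiction.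
-/

open Filter Topology

section MultisetGeneratingFunction

variable {ι : Type*}

open Classical in
/-- Splitting off the multiplicity of the element `a` of a multiset. -/
noncomputable def multisetEquivCountProd (a : ι) : ℕ × {s : Multiset ι // a ∉ s} ≃ Multiset ι where
  toFun p := Multiset.replicate p.1 a + p.2.1
  invFun s := (s.count a, ⟨s.filter (· ≠ a), by simp⟩)
  left_inv := by
    rintro ⟨n, s, hs⟩
    have hne : ∀ b ∈ s, b ≠ a := fun b hb h ↦ hs (h ▸ hb)
    have hrep : ∀ b ∈ Multiset.replicate n a, ¬ b ≠ a := fun b hb ↦ by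
      simp [Multiset.eq_of_mem_replicate hb]
    ext1
    · simp [Multiset.count_eq_zero_of_notMem hs]
    · simp [Multiset.filter_add, Multiset.filter_eq_self.2 hne, Multiset.filter_eq_nil.2 hrep]
  right_inv s := by
    dsimp only
    rw [← Multiset.filter_eq']
    exact Multiset.filter_add_not _ s

lemma prod_map_multiset_nonneg {w : ι → ℝ} (h0 : ∀ i, 0 ≤ w i) (s : Multiset ι) :
    0 ≤ (s.map w).prod :=
  Multiset.prod_nonneg (by simpa using fun i _ ↦ h0 i)

open Classical in
lemma hasSum_prod_map_multiset_of_update {w : ι → ℝ} {a : ι} {c : ℝ}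
    (h0 : ∀ i, 0 ≤ w i) (h1 : w a < 1)
    (h : HasSum (fun s : Multiset ι ↦ (s.map (Function.update w a 0)).prod) c) :
    HasSum (fun s : Multiset ι ↦ (s.map w).prod) ((1 - w a)⁻¹ * c) := by
  have hcongr (s : {s : Multiset ι // a ∉ s}) :
      (s.1.map (Function.update w a 0)).prod = (s.1.map w).prod := by
    congr 1
    refine Multiset.map_congr rfl fun b hb ↦ Function.update_of_ne ?_ _ _
    rintro rfl
    exact s.2 hb
  have hsupp : Function.support (fun s : Multiset ι ↦ (s.map (Function.update w a 0)).prod) ⊆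
      {s | a ∉ s} := fun s hs has ↦
    hs (Multiset.prod_eq_zero (Multiset.mem_map.2 ⟨a, has, by simp⟩))
  have hrest : HasSum (fun s : {s : Multiset ι // a ∉ s} ↦ (s.1.map w).prod) c :=
    ((hasSum_subtype_iff_of_support_subset hsupp).2 h).congr_fun fun s ↦ (hcongr s).symm
  have hgeom := hasSum_geometric_of_lt_one (h0 a) h1
  have hsummable := hgeom.summable.mul_of_nonneg hrest.summable
    (fun n ↦ pow_nonneg (h0 a) n) (fun s ↦ prod_map_multiset_nonneg h0 s.1)
  rw [← (multisetEquivCountProd a).hasSum_iff]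
  simpa [Function.comp_def, multisetEquivCountProd] using hgeom.mul hrest hsummable

lemma hasSum_prod_map_multiset_indicator {w : ι → ℝ} (h0 : ∀ i, 0 ≤ w i) (h1 : ∀ i, w i < 1)
    (F : Finset ι) :
    HasSum (fun s : Multiset ι ↦ (s.map ((F : Set ι).indicator w)).prod)
      (∏ i ∈ F, (1 - w i)⁻¹) := by
  classical
  induction F using Finset.induction_on with
  | empty =>
    convert hasSum_single (0 : Multiset ι) fun s hs ↦ ?_
    · simp
    · obtain ⟨a, ha⟩ := Multiset.exists_mem_of_ne_zero hs
      exact Multiset.prod_eq_zero (Multiset.mem_map.2 ⟨a, ha, by simp⟩)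
  | insert a F ha ih =>
    have hupdate : Function.update ((↑(insert a F) : Set ι).indicator w) a 0 =
        (F : Set ι).indicator w := by
      ext b
      by_cases hb : b = a
      · simp [hb, ha]
      · simp [hb, Set.indicator_apply]
    have hmem : ((↑(insert a F) : Set ι).indicator w) a = w a := by simp
    rw [Finset.prod_insert ha, ← hmem]
    refine hasSum_prod_map_multiset_of_update (Set.indicator_nonneg fun i _ ↦ h0 i) ?_ ?_
    · simpa using h1 a
    · rwa [hupdate]

lemma summable_neg_log_one_sub {w : ι → ℝ} (hw : Summable w) :
    Summable fun i ↦ -Real.log (1 - w i) := by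
  simpa [sub_eq_add_neg] using (Real.summable_log_one_add_of_summable hw.neg).neg

lemma neg_log_one_sub_nonneg {u : ℝ} (h0 : 0 ≤ u) (h1 : u < 1) : 0 ≤ -Real.log (1 - u) :=
  neg_nonneg.2 (Real.log_nonpos (by linarith) (by linarith))

lemma prod_inv_one_sub_eq_exp {w : ι → ℝ} (h1 : ∀ i, w i < 1) (F : Finset ι) :
    ∏ i ∈ F, (1 - w i)⁻¹ = Real.exp (∑ i ∈ F, -Real.log (1 - w i)) := by
  rw [Real.exp_sum]
  refine Finset.prod_congr rfl fun i _ ↦ ?_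
  rw [Real.exp_neg, Real.exp_log (sub_pos.2 (h1 i))]

theorem hasSum_prod_map_multiset {w : ι → ℝ} (h0 : ∀ i, 0 ≤ w i) (h1 : ∀ i, w i < 1)
    (hw : Summable w) :
    HasSum (fun s : Multiset ι ↦ (s.map w).prod)
      (Real.exp (∑' i, -Real.log (1 - w i))) := by
  classical
  have hlog := summable_neg_log_one_sub hw
  refine hasSum_of_isLUB_of_nonneg _ (prod_map_multiset_nonneg h0) ⟨?_, fun b hb ↦ ?_⟩
  · rintro _ ⟨X, rfl⟩
    let F := X.biUnion Multiset.toFinset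
    calc ∑ s ∈ X, (s.map w).prod
        = ∑ s ∈ X, (s.map ((F : Set ι).indicator w)).prod := by
          refine Finset.sum_congr rfl fun s hs ↦ congrArg _ (Multiset.map_congr rfl fun i hi ↦ ?_)
          rw [Set.indicator_of_mem]
          exact Finset.mem_biUnion.2 ⟨s, hs, Multiset.mem_toFinset.2 hi⟩
      _ ≤ ∏ i ∈ F, (1 - w i)⁻¹ := sum_le_hasSum X
          (fun s _ ↦ prod_map_multiset_nonneg (Set.indicator_nonneg fun i _ ↦ h0 i) s)
          (hasSum_prod_map_multiset_indicator h0 h1 F)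
      _ = Real.exp (∑ i ∈ F, -Real.log (1 - w i)) := prod_inv_one_sub_eq_exp h1 F
      _ ≤ Real.exp (∑' i, -Real.log (1 - w i)) := Real.exp_le_exp.2 <|
          hlog.sum_le_tsum F fun i _ ↦ neg_log_one_sub_nonneg (h0 i) (h1 i)
  · refine le_of_tendsto' (Real.continuous_exp.continuousAt.tendsto.comp hlog.hasSum) fun F ↦ ?_
    rw [Function.comp_apply, ← prod_inv_one_sub_eq_exp h1]
    refine hasSum_le_of_sum_le (hasSum_prod_map_multiset_indicator h0 h1 F) fun X ↦ ?_
    refine (Finset.sum_le_sum fun s _ ↦ ?_).trans (hb ⟨X, rfl⟩)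
    exact Multiset.prod_map_le_prod_map₀ _ _ (fun i _ ↦ Set.indicator_nonneg (fun i _ ↦ h0 i) i)
      fun i _ ↦ Set.indicator_le_self' (fun i _ ↦ h0 i) i

theorem hasSum_prod_map_multiset_card_ne_one {w : ι → ℝ} (h0 : ∀ i, 0 ≤ w i)
    (h1 : ∀ i, w i < 1) (hw : Summable w) :
    HasSum (fun s : {s : Multiset ι // s.card ≠ 1} ↦ (s.1.map w).prod)
      (Real.exp (∑' i, -Real.log (1 - w i)) - ∑' i, w i) := by
  have hall := hasSum_prod_map_multiset h0 h1 hw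
  have hsingle : HasSum (fun s : {s : Multiset ι | s.card = 1} ↦ (s.1.map w).prod)
      (∑' i, w i) := by
    have hrange : {s : Multiset ι | s.card = 1} = Set.range ({·} : ι → Multiset ι) := by
      ext s
      simp [Multiset.card_eq_one, eq_comm]
    rw [hrange]
    refine (Function.Injective.hasSum_range_iff (f := fun s : Multiset ι ↦ (s.map w).prod)
      fun _ _ ↦ Multiset.singleton_inj.1).2 ?_
    exact hw.hasSum.congr_fun fun i ↦ by simp
  refine (HasSum.hasSum_compl_iff (f := fun s : Multiset ι ↦ (s.map w).prod) hsingle).2 ?_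
  simpa using hall

end MultisetGeneratingFunction

section LogRemainder

/-- The part `∑_{k ≥ 2} uᵏ / k` of the logarithmic series of `-log (1 - u)`. -/
noncomputable def logRemainder (u : ℝ) : ℝ := -Real.log (1 - u) - u

lemma logRemainder_nonneg {u : ℝ} (hu : u < 1) : 0 ≤ logRemainder u := by
  have := Real.log_le_sub_one_of_pos (sub_pos.2 hu)
  simp only [logRemainder]
  linarith

lemma logRemainder_le_mul_sq {u c : ℝ} (hu : u ≤ c) (hc : c < 1) :
    logRemainder u ≤ (1 - c)⁻¹ * u ^ 2 := by
  have hpos : 0 < 1 - u := by linarith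
  calc logRemainder u ≤ (1 - u)⁻¹ - 1 - u := by
        have := Real.one_sub_inv_le_log_of_pos hpos
        simp only [logRemainder]
        linarith
    _ = (1 - u)⁻¹ * u ^ 2 := by field_simp; ring
    _ ≤ (1 - c)⁻¹ * u ^ 2 := by gcongr

lemma logRemainder_monotoneOn : MonotoneOn logRemainder (Set.Ico 0 1) := by
  rintro u ⟨hu0, hu1⟩ v ⟨-, hv1⟩ huv
  have hu : 0 < 1 - u := by linarith
  have hv : 0 < 1 - v := by linarith
  have hlog := Real.log_le_sub_one_of_pos (div_pos hv hu)
  rw [Real.log_div hv.ne' hu.ne'] at hlog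
  have hdiv : (1 - v) / (1 - u) ≤ 1 - (v - u) := by
    rw [div_le_iff₀ hu]
    nlinarith
  simp only [logRemainder]
  linarith

lemma continuousOn_neg_log_one_sub : ContinuousOn (fun u : ℝ ↦ -Real.log (1 - u)) (Set.Iio 1) :=
  ((continuousOn_const.sub continuousOn_id).log fun _ hu ↦ (sub_pos.2 hu).ne').neg

lemma continuousOn_logRemainder : ContinuousOn logRemainder (Set.Iio 1) :=
  continuousOn_neg_log_one_sub.sub continuousOn_id

lemma neg_log_one_sub_monotoneOn : MonotoneOn (fun u : ℝ ↦ -Real.log (1 - u)) (Set.Iio 1) :=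
  fun _ _ _ hv huv ↦ neg_le_neg (Real.log_le_log (sub_pos.2 hv) (by linarith))

variable {ι : Type*} {w : ι → ℝ}

lemma summable_logRemainder (hw : Summable w) : Summable fun i ↦ logRemainder (w i) :=
  (summable_neg_log_one_sub hw).sub hw

lemma tsum_neg_log_one_sub (hw : Summable w) :
    ∑' i, -Real.log (1 - w i) = ∑' i, w i + ∑' i, logRemainder (w i) := by
  rw [← hw.tsum_add (summable_logRemainder hw)]
  simp [logRemainder]

end LogRemainder

section SizeSeries

variable {A : Type*} {size : A → ℕ} {x y : ℝ}

/-- The ordinary generating function `∑ₐ x^|a|` of a size function. -/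
noncomputable def sizeSeries (size : A → ℕ) (x : ℝ) : ℝ := ∑' a, x ^ size a

/-- The logarithm of the generating function `∏ₐ (1 - x^|a|)⁻¹` of multisets. -/
noncomputable def logEulerProduct (size : A → ℕ) (x : ℝ) : ℝ := ∑' a, -Real.log (1 - x ^ size a)

/-- The part `∑_{k ≥ 2} H(xᵏ) / k` of the logarithm `∑_{k ≥ 1} H(xᵏ) / k` of the generating
function of multisets, where `H` is the generating function of the size function. -/
noncomputable def eulerRemainder (size : A → ℕ) (x : ℝ) : ℝ := ∑' a, logRemainder (x ^ size a)

lemma logEulerProduct_eq_add (hs : Summable fun a ↦ x ^ size a) :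
    logEulerProduct size x = sizeSeries size x + eulerRemainder size x :=
  tsum_neg_log_one_sub hs

lemma summable_pow_size_of_le (hx : 0 ≤ x) (hxy : x ≤ y) (hs : Summable fun a ↦ y ^ size a) :
    Summable fun a ↦ x ^ size a :=
  hs.of_nonneg_of_le (fun _ ↦ pow_nonneg hx _) fun _ ↦ pow_le_pow_left₀ hx hxy _

variable (hsize : ∀ a, 1 ≤ size a)
include hsize

lemma pow_size_mem_Ico (hx : x ∈ Set.Ico (0 : ℝ) 1) (a : A) : x ^ size a ∈ Set.Ico (0 : ℝ) 1 :=
  ⟨pow_nonneg hx.1 _, pow_lt_one₀ hx.1 hx.2 (Nat.one_le_iff_ne_zero.1 (hsize a))⟩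

lemma eulerRemainder_nonneg (hx : x ∈ Set.Ico (0 : ℝ) 1) : 0 ≤ eulerRemainder size x :=
  tsum_nonneg fun a ↦ logRemainder_nonneg (pow_size_mem_Ico hsize hx a).2

lemma sizeSeries_le_logEulerProduct (hx : x ∈ Set.Ico (0 : ℝ) 1)
    (hs : Summable fun a ↦ x ^ size a) : sizeSeries size x ≤ logEulerProduct size x := by
  rw [logEulerProduct_eq_add hs]
  exact le_add_of_nonneg_right (eulerRemainder_nonneg hsize hx)

lemma summable_logRemainder_pow_size_of_sq (hx : x ∈ Set.Ico (0 : ℝ) 1)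
    (hs : Summable fun a ↦ (x ^ 2) ^ size a) : Summable fun a ↦ logRemainder (x ^ size a) := by
  refine (hs.mul_left (1 - x)⁻¹).of_nonneg_of_le
    (fun a ↦ logRemainder_nonneg (pow_size_mem_Ico hsize hx a).2) fun a ↦ ?_
  have hle : x ^ size a ≤ x := pow_le_of_le_one hx.1 hx.2.le (Nat.one_le_iff_ne_zero.1 (hsize a))
  simpa only [pow_right_comm] using logRemainder_le_mul_sq hle hx.2

lemma eulerRemainder_le_of_le (hx : 0 ≤ x) (hxy : x ≤ y) (hy : y < 1)
    (hs : Summable fun a ↦ y ^ size a) : eulerRemainder size x ≤ eulerRemainder size y :=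
  (summable_logRemainder (summable_pow_size_of_le hx hxy hs)).tsum_le_tsum
    (fun a ↦ logRemainder_monotoneOn (pow_size_mem_Ico hsize ⟨hx, hxy.trans_lt hy⟩ a)
      (pow_size_mem_Ico hsize ⟨hx.trans hxy, hy⟩ a) (pow_le_pow_left₀ hx hxy _))
    (summable_logRemainder hs)

lemma continuousOn_tsum_comp_pow_size {f : ℝ → ℝ} (hf : ContinuousOn f (Set.Iio 1))
    (hmono : MonotoneOn f (Set.Ico 0 1)) (hf0 : 0 ≤ f 0) (hy : y < 1)
    (hs : Summable fun a ↦ f (y ^ size a)) :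
    ContinuousOn (fun x ↦ ∑' a, f (x ^ size a)) (Set.Icc 0 y) := by
  have hmem {x : ℝ} (hx : x ∈ Set.Icc 0 y) := pow_size_mem_Ico hsize ⟨hx.1, hx.2.trans_lt hy⟩
  refine continuousOn_tsum
    (fun a ↦ hf.comp (continuous_pow _).continuousOn fun x hx ↦ (hmem hx a).2) hs fun a x hx ↦ ?_
  have hzero : f 0 ≤ f (x ^ size a) :=
    hmono ⟨le_rfl, one_pos⟩ (hmem hx a) (hmem hx a).1
  rw [Real.norm_of_nonneg (hf0.trans hzero)]
  exact hmono (hmem hx a) (hmem (Set.right_mem_Icc.2 (hx.1.trans hx.2)) a)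
    (pow_le_pow_left₀ hx.1 hx.2 _)

lemma continuousOn_logEulerProduct (hy : y < 1) (hs : Summable fun a ↦ y ^ size a) :
    ContinuousOn (logEulerProduct size) (Set.Icc 0 y) :=
  continuousOn_tsum_comp_pow_size hsize continuousOn_neg_log_one_sub
    (neg_log_one_sub_monotoneOn.mono Set.Ico_subset_Iio_self) (by simp) hy
    (summable_neg_log_one_sub hs)

lemma continuousOn_eulerRemainder (hy : y ∈ Set.Ico (0 : ℝ) 1)
    (hs : Summable fun a ↦ (y ^ 2) ^ size a) : ContinuousOn (eulerRemainder size) (Set.Icc 0 y) :=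
  continuousOn_tsum_comp_pow_size hsize continuousOn_logRemainder logRemainder_monotoneOn
    (by simp [logRemainder]) hy.2 (summable_logRemainder_pow_size_of_sq hsize hy hs)

omit hsize

/-- The weight `x^|a|`, set to zero when `|a| > N`. -/
noncomputable def truncPow (size : A → ℕ) (N : ℕ) (x : ℝ) (a : A) : ℝ :=
  if size a ≤ N then x ^ size a else 0

lemma truncPow_nonneg (hx : 0 ≤ x) (N : ℕ) (a : A) : 0 ≤ truncPow size N x a := by
  unfold truncPow
  split_ifs
  exacts [pow_nonneg hx _, le_rfl]

lemma truncPow_le_pow (hx : 0 ≤ x) (N : ℕ) (a : A) : truncPow size N x a ≤ x ^ size a := by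
  unfold truncPow
  split_ifs
  exacts [le_rfl, pow_nonneg hx _]

lemma truncPow_lt_one (hsize : ∀ a, 1 ≤ size a) (hx : x ∈ Set.Ico (0 : ℝ) 1) (N : ℕ) (a : A) :
    truncPow size N x a < 1 :=
  (truncPow_le_pow hx.1 N a).trans_lt (pow_size_mem_Ico hsize hx a).2

lemma truncPow_le_self (hsize : ∀ a, 1 ≤ size a) (hx : x ∈ Set.Ico (0 : ℝ) 1) (N : ℕ) (a : A) :
    truncPow size N x a ≤ x :=
  (truncPow_le_pow hx.1 N a).trans <|
    pow_le_of_le_one hx.1 hx.2.le (Nat.one_le_iff_ne_zero.1 (hsize a))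

lemma truncPow_le_div_pow_mul (size : A → ℕ) (hx : 0 < x) (hxy : x ≤ y) (N : ℕ) (a : A) :
    truncPow size N y a ≤ (y / x) ^ N * x ^ size a := by
  have hone : 1 ≤ y / x := (one_le_div hx).2 hxy
  unfold truncPow
  split_ifs with ha
  · calc y ^ size a = (y / x) ^ size a * x ^ size a := by rw [← mul_pow, div_mul_cancel₀ _ hx.ne']
      _ ≤ (y / x) ^ N * x ^ size a := by gcongr
  · positivity

theorem summable_pow_size_of_tsum_truncPow_le (hx : 0 ≤ x) {M : ℕ} {c : ℝ}
    (h : ∀ N ≥ M, Summable (truncPow size N x) ∧ ∑' a, truncPow size N x a ≤ c) :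
    Summable fun a ↦ x ^ size a := by
  refine summable_of_sum_le (c := c) (fun a ↦ pow_nonneg hx _) fun F ↦ ?_
  obtain ⟨hs, hc⟩ := h (max M (F.sup size)) (le_max_left _ _)
  calc ∑ a ∈ F, x ^ size a = ∑ a ∈ F, truncPow size (max M (F.sup size)) x a :=
        Finset.sum_congr rfl fun a ha ↦
          (if_pos ((Finset.le_sup ha).trans (le_max_right _ _))).symm
    _ ≤ ∑' a, truncPow size (max M (F.sup size)) x a :=
        hs.sum_le_tsum F fun a _ ↦ truncPow_nonneg hx _ a
    _ ≤ c := hc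

end SizeSeries

section Fibers

variable {A : Type*} {size : A → ℕ} {x : ℝ}

lemma finite_fiber_of_summable_pow_size (hx : 0 < x) (hs : Summable fun a ↦ x ^ size a) (n : ℕ) :
    Finite {a // size a = n} := by
  have hconst : Summable fun _ : {a // size a = n} ↦ x ^ n :=
    (hs.comp_injective Subtype.val_injective).congr fun a ↦ by simp [a.2]
  refine (finite_or_infinite _).resolve_right fun _ ↦ ?_
  exact (pow_pos hx n).ne' ((summable_const_iff _).1 hconst)

lemma tsum_pow_size_fiber (n : ℕ) :
    ∑' a : {a // size a = n}, x ^ size a.1 = (Nat.card {a // size a = n} : ℝ) * x ^ n := by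
  rw [tsum_congr fun a : {a // size a = n} ↦ by rw [a.2], tsum_const, nsmul_eq_mul]

lemma summable_card_fiber_mul_pow_iff (hfin : ∀ n, Finite {a // size a = n}) (hx : 0 ≤ x) :
    (Summable fun n ↦ (Nat.card {a // size a = n} : ℝ) * x ^ n) ↔
      Summable fun a ↦ x ^ size a := by
  rw [← (Equiv.sigmaFiberEquiv size).summable_iff, Function.comp_def,
    summable_sigma_of_nonneg fun _ ↦ pow_nonneg hx _]
  simp only [Equiv.sigmaFiberEquiv_apply, tsum_pow_size_fiber]
  exact (and_iff_right fun n ↦ haveI := hfin n; Summable.of_finite).symm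

lemma tsum_card_fiber_mul_pow (hs : Summable fun a ↦ x ^ size a) :
    ∑' n, (Nat.card {a // size a = n} : ℝ) * x ^ n = sizeSeries size x := by
  have hsigma : Summable fun c ↦ x ^ size (Equiv.sigmaFiberEquiv size c) :=
    (Equiv.sigmaFiberEquiv size).summable_iff.2 hs
  rw [sizeSeries, ← (Equiv.sigmaFiberEquiv size).tsum_eq, hsigma.tsum_sigma]
  exact tsum_congr fun n ↦ (tsum_pow_size_fiber n).symm

theorem tsum_sizeSeries_pow_div (hsize : ∀ a, 1 ≤ size a) (hx : x ∈ Set.Ico (0 : ℝ) 1)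
    (hs : Summable fun a ↦ x ^ size a) :
    ∑' k : ℕ, (1 / ((k : ℝ) + 1)) * sizeSeries size (x ^ (k + 1)) = logEulerProduct size x := by
  have hlog (a : A) : HasSum (fun k : ℕ ↦ (x ^ size a) ^ (k + 1) / ((k : ℝ) + 1))
      (-Real.log (1 - x ^ size a)) := by
    have hmem := pow_size_mem_Ico hsize hx a
    exact Real.hasSum_pow_div_log_of_abs_lt_one ((abs_of_nonneg hmem.1).trans_lt hmem.2)
  have hsummable : Summable (Function.uncurry fun (a : A) (k : ℕ) ↦
      (x ^ size a) ^ (k + 1) / ((k : ℝ) + 1)) := by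
    refine (summable_prod_of_nonneg fun p ↦ ?_).2 ⟨fun a ↦ (hlog a).summable, ?_⟩
    · have := hx.1
      simp only [Function.uncurry, Pi.zero_apply]
      positivity
    · simpa only [Function.uncurry, (hlog _).tsum_eq] using summable_neg_log_one_sub hs
  calc ∑' k : ℕ, (1 / ((k : ℝ) + 1)) * sizeSeries size (x ^ (k + 1))
      = ∑' (k : ℕ) (a : A), (x ^ size a) ^ (k + 1) / ((k : ℝ) + 1) := by
        refine tsum_congr fun k ↦ ?_
        rw [sizeSeries, ← tsum_mul_left]
        refine tsum_congr fun a ↦ ?_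
        rw [pow_right_comm]
        ring
    _ = ∑' (a : A) (k : ℕ), (x ^ size a) ^ (k + 1) / ((k : ℝ) + 1) := hsummable.tsum_comm
    _ = logEulerProduct size x := tsum_congr fun a ↦ (hlog a).tsum_eq

end Fibers

open Classical in
lemma hasSum_prod_map_multiset_card_ne_one_update {ι : Type*} {w : ι → ℝ} (h0 : ∀ i, 0 ≤ w i)
    (h1 : ∀ i, w i < 1) (hw : Summable w) (x : ℝ) :
    HasSum (fun s : {s : Multiset ι // s.card ≠ 1} ↦ if s.1 = 0 then x else (s.1.map w).prod)
      (Real.exp (∑' i, -Real.log (1 - w i)) - ∑' i, w i - 1 + x) := by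
  have hupdate := (hasSum_prod_map_multiset_card_ne_one h0 h1 hw).update ⟨0, by simp⟩ x
  rw [Multiset.map_zero, Multiset.prod_zero, sub_add_comm] at hupdate
  exact hupdate.congr_fun fun s ↦ by simp [Function.update_apply, Subtype.ext_iff]

lemma hasSum_some {A G : Type*} [AddCommGroup G] [TopologicalSpace G] [IsTopologicalAddGroup G]
    {f : Option A → G} {c : G} (h : HasSum f c) :
    HasSum (fun a ↦ f (some a)) (c - f none) := by
  classical
  have hupdate := h.update none 0
  rw [zero_sub, neg_add_eq_sub] at hupdate
  refine ((Option.some_injective A).hasSum_iff fun o ho ↦ ?_).2 hupdate |>.congr_fun fun a ↦ ?_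
  · cases o with
    | none => simp
    | some a => exact absurd ⟨a, rfl⟩ ho
  · simp

lemma pow_multiset_map_sum {A M : Type*} [CommMonoid M] (x : M) (f : A → ℕ) (s : Multiset A) :
    x ^ (s.map f).sum = (s.map fun a ↦ x ^ f a).prod := by
  induction s using Multiset.induction_on with
  | empty => simp
  | cons a s ih => simp [pow_add, ih]

lemma lt_sum_map_of_mem {A : Type*} {f : A → ℕ} (hf : ∀ a, 1 ≤ f a) {s : Multiset A}
    (hs : s.card ≠ 1) {a : A} (ha : a ∈ s) : f a < (s.map f).sum := by
  obtain ⟨t, rfl⟩ := Multiset.exists_cons_of_mem ha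
  obtain ⟨b, hb⟩ := Multiset.exists_mem_of_ne_zero (s := t) (by rintro rfl; simp at hs)
  have hle := Multiset.single_le_sum (fun _ _ ↦ Nat.zero_le _) _ (Multiset.mem_map_of_mem f hb)
  have := hf b
  simp only [Multiset.map_cons, Multiset.sum_cons]
  omega

/-- The recursive decomposition of the class `A` of hierarchies avoiding a fixed hierarchy of size
`m`: passing to the children of the root identifies `A`, together with the excluded hierarchy
(encoded as `none`), with the multisets on `A` that do not consist of a single element. The empty
multiset belongs to the leaf, which has size `1`; hence the maximum in `size_eq`. -/
structure AvoidanceDecomposition (A : Type*) (m : ℕ) where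
  size : A → ℕ
  children : Option A ≃ {s : Multiset A // s.card ≠ 1}
  size_eq : ∀ o : Option A, o.elim m size = max 1 ((children o).1.map size).sum

namespace AvoidanceDecomposition

variable {A : Type*} {m : ℕ} (D : AvoidanceDecomposition A m) {x y r : ℝ} {N : ℕ}

lemma one_le_size (a : A) : 1 ≤ D.size a :=
  (le_max_left _ _).trans_eq (D.size_eq (some a)).symm

lemma elim_size_of_children_ne_zero {o : Option A} (ho : (D.children o).1 ≠ 0) :
    o.elim m D.size = ((D.children o).1.map D.size).sum := by
  obtain ⟨a, ha⟩ := Multiset.exists_mem_of_ne_zero ho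
  have := lt_sum_map_of_mem D.one_le_size (D.children o).2 ha
  rw [D.size_eq, max_eq_right (by omega)]

lemma elim_size_of_children_eq_zero {o : Option A} (ho : (D.children o).1 = 0) :
    o.elim m D.size = 1 := by
  simp [D.size_eq, ho]

lemma exists_size_eq_one (hm : 2 ≤ m) : ∃ a, D.size a = 1 := by
  have h := D.elim_size_of_children_eq_zero (o := D.children.symm ⟨0, by simp⟩) (by simp)
  cases ho : D.children.symm ⟨0, by simp⟩ with
  | none =>
    rw [ho, Option.elim_none] at h
    omega
  | some a =>
    rw [ho] at h
    exact ⟨a, h⟩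

open Classical in
lemma pow_elim_size (x : ℝ) (o : Option A) :
    x ^ o.elim m D.size =
      if (D.children o).1 = 0 then x else ((D.children o).1.map fun a ↦ x ^ D.size a).prod := by
  split_ifs with ho
  · rw [D.elim_size_of_children_eq_zero ho, pow_one]
  · rw [D.elim_size_of_children_ne_zero ho, pow_multiset_map_sum]

theorem exp_logEulerProduct_add (hx : x ∈ Set.Ico (0 : ℝ) 1) (hs : Summable fun a ↦ x ^ D.size a) :
    Real.exp (logEulerProduct D.size x) + x = 2 * sizeSeries D.size x + x ^ m + 1 := by
  classical
  have hmem := pow_size_mem_Ico D.one_le_size hx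
  have hsum := D.children.hasSum_iff.2 (hasSum_prod_map_multiset_card_ne_one_update
    (fun a ↦ (hmem a).1) (fun a ↦ (hmem a).2) hs x)
  have hsome := hasSum_some (hsum.congr_fun fun o ↦ D.pow_elim_size x o)
  have := hsome.unique hs.hasSum
  simp only [Option.elim_none] at this
  simp only [logEulerProduct, sizeSeries]
  linarith

open Classical in
lemma truncPow_succ_le (hx : 0 ≤ x) (o : Option A) :
    truncPow (fun o : Option A ↦ o.elim m D.size) (N + 1) x o ≤
      if (D.children o).1 = 0 then x else ((D.children o).1.map (truncPow D.size N x)).prod := by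
  unfold truncPow
  split_ifs with hN ho ho
  · rw [D.pow_elim_size, if_pos ho]
  · rw [D.pow_elim_size, if_neg ho]
    refine (congrArg _ (Multiset.map_congr rfl fun a ha ↦ (if_pos ?_).symm)).le
    have := lt_sum_map_of_mem D.one_le_size (D.children o).2 ha
    have := D.elim_size_of_children_ne_zero ho
    dsimp only at hN
    omega
  · exact hx
  · exact prod_map_multiset_nonneg (truncPow_nonneg hx N) _

theorem summable_truncPow_succ (hx : x ∈ Set.Ico (0 : ℝ) 1) (hs : Summable (truncPow D.size N x)) :
    Summable (truncPow D.size (N + 1) x) ∧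
    ∑' a, truncPow D.size (N + 1) x a + (if m ≤ N + 1 then x ^ m else 0) ≤
      Real.exp (∑' a, -Real.log (1 - truncPow D.size N x a)) - ∑' a, truncPow D.size N x a
        - 1 + x := by
  classical
  have hsum := D.children.hasSum_iff.2 (hasSum_prod_map_multiset_card_ne_one_update
    (truncPow_nonneg hx.1 N) (truncPow_lt_one D.one_le_size hx N) hs x)
  have hsummable := hsum.summable.of_nonneg_of_le (truncPow_nonneg hx.1 (N + 1))
    (D.truncPow_succ_le hx.1)
  have hsome := hasSum_some hsummable.hasSum
  have hle := hasSum_le (D.truncPow_succ_le hx.1) hsummable.hasSum hsum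
  refine ⟨hsome.summable, ?_⟩
  have htsum : ∑' a, truncPow D.size (N + 1) x a = _ := hsome.tsum_eq
  have hnone : truncPow (fun o : Option A ↦ o.elim m D.size) (N + 1) x none =
    if m ≤ N + 1 then x ^ m else 0 := rfl
  linarith

end AvoidanceDecomposition

section RealInequalities

lemma exp_add_sub_le_of_le {r t y : ℝ} (hr : 0 ≤ r) (ht : 0 ≤ t) (hty : t ≤ y) :
    Real.exp (t + r) - t ≤ Real.exp (y + r) - y := by
  have hone : 1 ≤ Real.exp (t + r) := Real.one_le_exp (by positivity)
  have hmul : Real.exp (y + r) = Real.exp (t + r) * Real.exp (y - t) := by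
    rw [← Real.exp_add]
    ring_nf
  nlinarith [Real.add_one_le_exp (y - t)]

/-- Strict convexity of `exp`: its graph lies above the tangent at `log 2`. -/
lemma two_mul_add_one_sub_exp_lt {t : ℝ} (ht : t ≠ Real.log 2) :
    2 * t + 1 - Real.exp t < 2 * Real.log 2 - 1 := by
  have h := Real.add_one_lt_exp (sub_ne_zero.2 ht)
  rw [Real.exp_sub, Real.exp_log two_pos] at h
  linarith

lemma pow_sub_pow_lt_sub {x y : ℝ} (hx : 0 ≤ x) (hxy : x < y) (hadd : x + y < 1) {n : ℕ}
    (hn : 2 ≤ n) : y ^ n - x ^ n < y - x := by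
  induction n, hn using Nat.le_induction with
  | base => nlinarith
  | succ n hn ih =>
    have hpow : x ^ n ≤ x := pow_le_of_le_one hx (by linarith) (by omega)
    have hy : 0 < y := by linarith
    calc y ^ (n + 1) - x ^ (n + 1) = y * (y ^ n - x ^ n) + x ^ n * (y - x) := by ring
      _ < y * (y - x) + x * (y - x) := by
        refine add_lt_add_of_lt_of_le (mul_lt_mul_of_pos_left ih hy) ?_
        gcongr
      _ ≤ y - x := by nlinarith

end RealInequalities

namespace AvoidanceDecomposition

variable {A : Type*} {m : ℕ} (D : AvoidanceDecomposition A m) {x y r : ℝ} {N : ℕ}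

lemma tsum_truncPow_succ_le (hx : x ∈ Set.Ico (0 : ℝ) 1) (hr : 0 ≤ r)
    (hs : Summable (truncPow D.size N x)) (hy : ∑' a, truncPow D.size N x a ≤ y)
    (hrem : ∑' a, logRemainder (truncPow D.size N x a) ≤ r)
    (hstep : Real.exp (y + r) + x ≤ 2 * y + 1 + if m ≤ N + 1 then x ^ m else 0) :
    Summable (truncPow D.size (N + 1) x) ∧ ∑' a, truncPow D.size (N + 1) x a ≤ y := by
  obtain ⟨hs', hle⟩ := D.summable_truncPow_succ hx hs
  refine ⟨hs', ?_⟩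
  rw [tsum_neg_log_one_sub hs] at hle
  have hexp := Real.exp_le_exp.2 (add_le_add_right hrem (∑' a, truncPow D.size N x a))
  have hmono := exp_add_sub_le_of_le hr (tsum_nonneg (truncPow_nonneg hx.1 N)) hy
  linarith

lemma truncPow_zero : truncPow D.size 0 x = 0 := by
  ext a
  have := D.one_le_size a
  exact if_neg (by omega)

lemma summable_one_tenth_pow_size : Summable fun a ↦ (1 / 10 : ℝ) ^ D.size a := by
  have hx : (1 / 10 : ℝ) ∈ Set.Ico (0 : ℝ) 1 := by norm_num
  refine summable_pow_size_of_tsum_truncPow_le (M := 0) (c := 1 / 5) hx.1 fun N hN ↦ ?_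
  clear hN
  induction N with
  | zero =>
    rw [truncPow_zero]
    exact ⟨summable_zero, by simp⟩
  | succ N ih =>
    obtain ⟨hs, hle⟩ := ih
    have hrem (a : A) : logRemainder (truncPow D.size N (1 / 10) a) ≤
        1 / 9 * truncPow D.size N (1 / 10) a := by
      have hself := truncPow_le_self D.one_le_size hx N a
      have := logRemainder_le_mul_sq hself hx.2
      nlinarith [truncPow_nonneg (size := D.size) hx.1 N a]
    have hsum := (summable_logRemainder hs).tsum_le_tsum hrem (hs.mul_left _)
    rw [tsum_mul_left] at hsum
    refine D.tsum_truncPow_succ_le hx (r := 1 / 45) (by norm_num) hs hle (by linarith) ?_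
    have hexp := Real.exp_bound_div_one_sub_of_interval (x := 1 / 5 + 1 / 45) (by norm_num)
      (by norm_num)
    have : 0 ≤ if m ≤ N + 1 then (1 / 10 : ℝ) ^ m else 0 := by positivity
    linarith

/-- By the functional equation this is `2 * T - exp T + 1`, where `T = logEulerProduct D.size x`.
It is at most `2 * log 2 - 1`, and the value `2 * log 2 - 1` means `exp T = 2`. -/
noncomputable def excess (x : ℝ) : ℝ := 2 * eulerRemainder D.size x + x - x ^ m

lemma excess_eq (hx : x ∈ Set.Ico (0 : ℝ) 1) (hs : Summable fun a ↦ x ^ D.size a) :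
    D.excess x = 2 * logEulerProduct D.size x + 1 - Real.exp (logEulerProduct D.size x) := by
  have := D.exp_logEulerProduct_add hx hs
  have := logEulerProduct_eq_add hs
  simp only [excess]
  linarith

lemma excess_eq_of_logEulerProduct_eq (hx : x ∈ Set.Ico (0 : ℝ) 1)
    (hs : Summable fun a ↦ x ^ D.size a) (h : logEulerProduct D.size x = Real.log 2) :
    D.excess x = 2 * Real.log 2 - 1 := by
  rw [D.excess_eq hx hs, h, Real.exp_log two_pos]
  ring

lemma excess_lt_of_logEulerProduct_ne (hx : x ∈ Set.Ico (0 : ℝ) 1)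
    (hs : Summable fun a ↦ x ^ D.size a) (h : logEulerProduct D.size x ≠ Real.log 2) :
    D.excess x < 2 * Real.log 2 - 1 := by
  rw [D.excess_eq hx hs]
  exact two_mul_add_one_sub_exp_lt h

lemma excess_le (hx : x ∈ Set.Ico (0 : ℝ) 1) (hs : Summable fun a ↦ x ^ D.size a) :
    D.excess x ≤ 2 * Real.log 2 - 1 :=
  (eq_or_ne _ _).elim (fun h ↦ (D.excess_eq_of_logEulerProduct_eq hx hs h).le)
    fun h ↦ (D.excess_lt_of_logEulerProduct_ne hx hs h).le

/-- At `1/2` the leaf alone contributes `2 * logRemainder (1/2) = 2 * log 2 - 1` to the excess. -/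
lemma lt_half_of_summable (hm : 2 ≤ m) (hs : Summable fun a ↦ x ^ D.size a) : x < 1 / 2 := by
  by_contra! hx
  have hmem : (1 / 2 : ℝ) ∈ Set.Ico (0 : ℝ) 1 := by norm_num
  have hs' := summable_pow_size_of_le hmem.1 hx hs
  obtain ⟨a, ha⟩ := D.exists_size_eq_one hm
  have hleaf : logRemainder ((1 / 2) ^ D.size a) ≤ eulerRemainder D.size (1 / 2) :=
    (summable_logRemainder hs').le_tsum a fun b _ ↦
      logRemainder_nonneg (pow_size_mem_Ico D.one_le_size hmem b).2
  have hlog : logRemainder ((1 / 2) ^ D.size a) = Real.log 2 - 1 / 2 := by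
    rw [ha, logRemainder, show (1 : ℝ) - (1 / 2) ^ 1 = 2⁻¹ by norm_num, Real.log_inv]
    norm_num
  have hpow : (1 / 2 : ℝ) ^ m ≤ (1 / 2) ^ 2 := pow_le_pow_of_le_one (by norm_num) (by norm_num) hm
  have hexcess := D.excess_le hmem hs'
  simp only [excess] at hexcess
  linarith

lemma mem_Ico_of_summable (hm : 2 ≤ m) (hx : 0 ≤ x) (hs : Summable fun a ↦ x ^ D.size a) :
    x ∈ Set.Ico (0 : ℝ) 1 :=
  ⟨hx, (D.lt_half_of_summable hm hs).trans (by norm_num)⟩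

lemma excess_lt_excess (hm : 2 ≤ m) (hx : 0 ≤ x) (hxy : x < y)
    (hs : Summable fun a ↦ y ^ D.size a) : D.excess x < D.excess y := by
  have hy := D.lt_half_of_summable hm hs
  have hrem := eulerRemainder_le_of_le D.one_le_size hx hxy.le (by linarith) hs
  have hpow := pow_sub_pow_lt_sub hx hxy (by linarith) hm
  simp only [excess]
  linarith

theorem logEulerProduct_le_log_two (hm : 2 ≤ m) (hx : 0 ≤ x) (hs : Summable fun a ↦ x ^ D.size a) :
    logEulerProduct D.size x ≤ Real.log 2 := by
  by_contra! hlt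
  have hmem := D.mem_Ico_of_summable hm hx hs
  have hzero : logEulerProduct D.size 0 = 0 := by
    have (a : A) : D.size a ≠ 0 := Nat.one_le_iff_ne_zero.1 (D.one_le_size a)
    simp [logEulerProduct, this]
  obtain ⟨y, hy, hlog⟩ := intermediate_value_Icc hx
    (continuousOn_logEulerProduct D.one_le_size hmem.2 hs)
    ⟨hzero.trans_le (Real.log_nonneg one_le_two), hlt.le⟩
  have hyx : y < x := hy.2.lt_of_ne (by rintro rfl; exact hlt.ne' hlog)
  have hsy := summable_pow_size_of_le hy.1 hy.2 hs
  have heq := D.excess_eq_of_logEulerProduct_eq ⟨hy.1, hy.2.trans_lt hmem.2⟩ hsy hlog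
  exact ((D.excess_lt_excess hm hy.1 hyx hs).trans_le (D.excess_le hmem hs)).ne heq

lemma summable_pow_size_of_forall_lt (hm : 2 ≤ m) (hx : 0 < x)
    (h : ∀ y, 0 < y → y < x → Summable fun a ↦ y ^ D.size a) :
    Summable fun a ↦ x ^ D.size a := by
  refine summable_of_sum_le (c := Real.log 2) (fun a ↦ pow_nonneg hx.le _) fun F ↦ ?_
  have htendsto : Tendsto (fun y ↦ ∑ a ∈ F, y ^ D.size a) (𝓝[<] x) (𝓝 (∑ a ∈ F, x ^ D.size a)) :=
    ((continuous_finsetSum F fun a _ ↦ continuous_pow (D.size a)).tendsto x).mono_left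
      nhdsWithin_le_nhds
  refine le_of_tendsto htendsto ?_
  filter_upwards [Ioo_mem_nhdsLT hx] with y hy
  have hs := h y hy.1 hy.2
  calc ∑ a ∈ F, y ^ D.size a ≤ sizeSeries D.size y :=
        hs.sum_le_tsum F fun a _ ↦ pow_nonneg hy.1.le _
    _ ≤ logEulerProduct D.size y := sizeSeries_le_logEulerProduct D.one_le_size
        (D.mem_Ico_of_summable hm hy.1.le hs) hs
    _ ≤ Real.log 2 := D.logEulerProduct_le_log_two hm hy.1.le hs

lemma summable_of_excess_le (hx : x ∈ Set.Ico (0 : ℝ) 1)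
    (hsq : Summable fun a ↦ (x ^ 2) ^ D.size a) (hexcess : D.excess x ≤ 2 * Real.log 2 - 1)
    (hs : Summable (truncPow D.size m x))
    (hle : ∑' a, truncPow D.size m x a ≤ Real.log 2 - eulerRemainder D.size x) :
    Summable fun a ↦ x ^ D.size a := by
  have hsrem := summable_logRemainder_pow_size_of_sq D.one_le_size hx hsq
  refine summable_pow_size_of_tsum_truncPow_le (M := m)
    (c := Real.log 2 - eulerRemainder D.size x) hx.1 fun N hN ↦ ?_
  induction N, hN using Nat.le_induction with
  | base => exact ⟨hs, hle⟩
  | succ N hN ih =>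
    have hrem (a : A) : logRemainder (truncPow D.size N x a) ≤ logRemainder (x ^ D.size a) :=
      logRemainder_monotoneOn
        ⟨truncPow_nonneg hx.1 N a, truncPow_lt_one D.one_le_size hx N a⟩
        (pow_size_mem_Ico D.one_le_size hx a) (truncPow_le_pow hx.1 N a)
    refine D.tsum_truncPow_succ_le hx (eulerRemainder_nonneg D.one_le_size hx) ih.1 ih.2
      ((summable_logRemainder ih.1).tsum_le_tsum hrem hsrem) ?_
    rw [sub_add_cancel, Real.exp_log two_pos, if_pos (by omega)]
    simp only [excess] at hexcess
    linarith

lemma continuousAt_eulerRemainder (hx : x ∈ Set.Ioo (0 : ℝ) 1)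
    (hs : Summable fun a ↦ x ^ D.size a) : ContinuousAt (eulerRemainder D.size) x := by
  have hsqrt : √x ∈ Set.Ico (0 : ℝ) 1 :=
    ⟨Real.sqrt_nonneg x, (Real.sqrt_lt' one_pos).2 (by simpa using hx.2)⟩
  have hlt : x < √x := Real.lt_sqrt_self_iff.2 ⟨hx.1.ne', hx.2⟩
  refine (continuousOn_eulerRemainder D.one_le_size hsqrt ?_).continuousAt (Icc_mem_nhds hx.1 hlt)
  rwa [Real.sq_sqrt hx.1.le]

theorem exists_gt_summable_of_logEulerProduct_lt (hm : 2 ≤ m) (hx : 0 < x)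
    (hs : Summable fun a ↦ x ^ D.size a) (hlt : logEulerProduct D.size x < Real.log 2) :
    ∃ y > x, Summable fun a ↦ y ^ D.size a := by
  have hmem := D.mem_Ico_of_summable hm hx.le hs
  have hcont := D.continuousAt_eulerRemainder ⟨hx, hmem.2⟩ hs
  have hexcess : D.excess x < 2 * Real.log 2 - 1 :=
    D.excess_lt_of_logEulerProduct_ne hmem hs hlt.ne
  have hbase : (x / x) ^ m * sizeSeries D.size x < Real.log 2 - eulerRemainder D.size x := by
    rw [div_self hx.ne', one_pow, one_mul]
    linarith [logEulerProduct_eq_add hs]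
  have hcontExcess : ContinuousAt D.excess x :=
    ((hcont.const_mul 2).add continuousAt_id).sub (continuousAt_id.pow m)
  have hcontBase : ContinuousAt (fun y ↦ (y / x) ^ m * sizeSeries D.size x) x := by fun_prop
  have heventually : ∀ᶠ y in 𝓝[>] x, y < √x ∧ D.excess y < 2 * Real.log 2 - 1 ∧
      (y / x) ^ m * sizeSeries D.size x < Real.log 2 - eulerRemainder D.size y :=
    nhdsWithin_le_nhds <| (eventually_lt_nhds (Real.lt_sqrt_self_iff.2 ⟨hx.ne', hmem.2⟩)).and
      ((hcontExcess.eventually_lt_const hexcess).and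
        (hcontBase.eventually_lt (continuousAt_const.sub hcont) hbase))
  obtain ⟨y, ⟨hysqrt, hyexcess, hybase⟩, hxy⟩ :=
    (heventually.and eventually_mem_nhdsWithin).exists
  rw [Set.mem_Ioi] at hxy
  have hy0 : 0 ≤ y := hx.le.trans hxy.le
  have hysq : y ^ 2 ≤ x := ((Real.lt_sqrt hy0).1 hysqrt).le
  have hsq := summable_pow_size_of_le (sq_nonneg y) hysq hs
  have hymem : y ∈ Set.Ico (0 : ℝ) 1 := ⟨hy0, by nlinarith [hmem.2]⟩
  have htrunc := truncPow_le_div_pow_mul D.size hx hxy.le m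
  have hstrunc := (hs.mul_left _).of_nonneg_of_le (truncPow_nonneg hy0 m) htrunc
  refine ⟨y, hxy, D.summable_of_excess_le hymem hsq hyexcess.le hstrunc ?_⟩
  calc ∑' a, truncPow D.size m y a ≤ ∑' a, (y / x) ^ m * x ^ D.size a :=
        hstrunc.tsum_le_tsum htrunc (hs.mul_left _)
    _ = (y / x) ^ m * sizeSeries D.size x := tsum_mul_left
    _ ≤ Real.log 2 - eulerRemainder D.size y := hybase.le

theorem exp_logEulerProduct_eq_two (hm : 2 ≤ m) (hx : 0 < x) (hs : Summable fun a ↦ x ^ D.size a)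
    (hgt : ∀ y > x, ¬ Summable fun a ↦ y ^ D.size a) :
    Real.exp (logEulerProduct D.size x) = 2 := by
  have hle := D.logEulerProduct_le_log_two hm hx.le hs
  have heq : logEulerProduct D.size x = Real.log 2 := hle.antisymm <| by
    by_contra! h
    obtain ⟨y, hxy, hy⟩ := D.exists_gt_summable_of_logEulerProduct_lt hm hx hs h
    exact hgt y hxy hy
  rw [heq, Real.exp_log two_pos]

end AvoidanceDecomposition

section Forall₂

variable {α β γ : Type*} {R R' : α → β → Prop} {l : List α} {k : List β}

lemma forall₂_imp_of_mem (h : List.Forall₂ R l k) (himp : ∀ a ∈ l, ∀ b, R a b → R' a b) :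
    List.Forall₂ R' l k :=
  ((List.forall₂_and_left l k).2 ⟨himp, h⟩).imp fun _ b hab ↦ hab.1 b hab.2

lemma forall₂_apply_eq_iff {f : α → γ} {g : β → γ} :
    List.Forall₂ (fun a b ↦ f a = g b) l k ↔ l.map f = k.map g := by
  rw [← List.forall₂_eq_eq_eq, List.forall₂_map_left_iff, List.forall₂_map_right_iff]

end Forall₂

namespace RTree

@[elab_as_elim]
theorem induction_children {P : RTree → Prop} (node : ∀ l, (∀ t ∈ l, P t) → P (.node l)) :
    ∀ t, P t
  | .node l => node l fun t _ ↦ induction_children node t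
decreasing_by
  have := List.sizeOf_lt_of_mem ‹t ∈ l›
  simp only [RTree.node.sizeOf_spec]
  omega

lemma leaves_nil : leaves (.node []) = 1 := by rw [leaves]

lemma leaves_of_ne_nil {l : List RTree} (hl : l ≠ []) :
    leaves (.node l) = (l.map leaves).sum := by
  cases l with
  | nil => exact absurd rfl hl
  | cons a l => rw [leaves, List.attach_map_val]

lemma one_le_leaves (t : RTree) : 1 ≤ leaves t := by
  induction t using induction_children with
  | node l ih =>
    cases l with
    | nil => exact leaves_nil.ge
    | cons a l =>
      rw [leaves_of_ne_nil (by simp)]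
      exact (ih a (by simp)).trans (List.le_sum_of_mem (by simp))

lemma leaves_node (l : List RTree) : leaves (.node l) = max 1 (l.map leaves).sum := by
  rcases eq_or_ne l [] with rfl | hl
  · exact leaves_nil
  · rw [← leaves_of_ne_nil hl, max_eq_right (one_le_leaves _)]

lemma leaves_le_of_subtreeOf {s t : RTree} (h : SubtreeOf s t) : leaves s ≤ leaves t := by
  induction h with
  | refl => exact le_rfl
  | child hc _ ih =>
    rw [leaves_node]
    exact ih.trans ((List.le_sum_of_mem (List.mem_map_of_mem hc)).trans (le_max_right _ _))

lemma leaves_lt_of_mem {l : List RTree} (hl : l.length ≠ 1) {c : RTree} (hc : c ∈ l) :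
    leaves c < leaves (.node l) := by
  have h := lt_sum_map_of_mem (s := (l : Multiset RTree)) one_le_leaves hl hc
  rw [Multiset.map_coe, Multiset.sum_coe] at h
  exact h.trans_le ((le_max_right _ _).trans_eq (leaves_node l).symm)

lemma Iso.leaves_eq {s t : RTree} (h : Iso s t) : leaves s = leaves t := by
  induction s using induction_children generalizing t with
  | node l ih =>
    obtain ⟨hlk, hperm⟩ := h
    have hmap := forall₂_apply_eq_iff.1 (forall₂_imp_of_mem hlk fun a ha b hab ↦ ih a ha hab)
    rw [leaves_node, leaves_node, hmap, (hperm.map leaves).sum_eq]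

lemma avoids_of_leaves_lt {s t : RTree} (h : leaves t < leaves s) : Avoids t s :=
  fun _ hu hiso ↦ ((leaves_le_of_subtreeOf hu).trans_lt h).ne hiso.leaves_eq

lemma avoids_node_iff {s : RTree} {l : List RTree} :
    Avoids (.node l) s ↔ ¬ Iso (.node l) s ∧ ∀ c ∈ l, Avoids c s := by
  refine ⟨fun h ↦ ⟨h _ (.refl _), fun c hc u hu ↦ h u (.child hc hu)⟩, fun ⟨hroot, hl⟩ u hu ↦ ?_⟩
  cases hu with
  | refl => exact hroot
  | child hc hu => exact hl _ hc u hu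

lemma isHierarchy_node_iff {l : List RTree} :
    IsHierarchy (.node l) ↔ l.length ≠ 1 ∧ ∀ c ∈ l, IsHierarchy c :=
  ⟨fun ⟨hl, hc⟩ ↦ ⟨hl, hc⟩, fun ⟨hl, hc⟩ ↦ ⟨hl, hc⟩⟩

/-- Isomorphism classes of rooted unordered trees. Since `Iso` is not known at this point to be an
equivalence relation, the quotient is by the relation it generates; see `isoClass_eq_iff`. -/
def IsoClass : Type := Quot Iso

/-- The isomorphism class of a tree. -/
def isoClass (t : RTree) : IsoClass := Quot.mk Iso t

lemma isoClass_surjective : Function.Surjective isoClass := Quot.mk_surjective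

namespace IsoClass

/-- The size (number of leaves) of an isomorphism class of trees. -/
def size : IsoClass → ℕ := Quot.lift leaves fun _ _ ↦ Iso.leaves_eq

/-- The multiset of isomorphism classes of the subtrees hanging off the root. -/
def children : IsoClass → Multiset IsoClass :=
  Quot.lift (fun | .node l => (l.map isoClass : List IsoClass)) fun _ _ ⟨hlk, hperm⟩ ↦
    (congrArg _ (forall₂_apply_eq_iff.1 (hlk.imp fun _ _ ↦ Quot.sound))).trans
      (Multiset.coe_eq_coe.2 (hperm.map isoClass))

lemma size_isoClass (t : RTree) : size (isoClass t) = leaves t := rfl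

lemma children_isoClass_node (l : List RTree) :
    children (isoClass (.node l)) = (l.map isoClass : List IsoClass) := rfl

lemma size_eq (q : IsoClass) : size q = max 1 ((children q).map size).sum := by
  obtain ⟨⟨l⟩, rfl⟩ := isoClass_surjective q
  rw [size_isoClass, leaves_node, children_isoClass_node, Multiset.map_coe, Multiset.sum_coe,
    List.map_map]
  rfl

lemma children_surjective : Function.Surjective children := by
  intro s
  obtain ⟨l, rfl⟩ := Quot.exists_rep s
  obtain ⟨l, rfl⟩ := List.map_surjective_iff.2 isoClass_surjective l
  exact ⟨isoClass (.node l), children_isoClass_node l⟩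

/-- The induction gives more than injectivity: trees whose classes have the same children are
related by `Iso` itself, not merely by the equivalence relation it generates. -/
lemma iso_of_children_eq {s t : RTree} (h : children (isoClass s) = children (isoClass t)) :
    Iso s t := by
  induction s using induction_children generalizing t with
  | node l ih =>
    obtain ⟨k⟩ := t
    rw [children_isoClass_node, children_isoClass_node, Multiset.coe_eq_coe] at h
    obtain ⟨u, hlu, huk⟩ := List.perm_comp_forall₂ h (forall₂_apply_eq_iff.2 (List.map_id _))
    have hlu' := forall₂_apply_eq_iff.2 ((List.map_id _).symm.trans (forall₂_apply_eq_iff.1 hlu))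
    exact ⟨forall₂_imp_of_mem hlu' fun a ha _ hab ↦ ih a ha (congrArg children hab), huk⟩

lemma isoClass_eq_iff {s t : RTree} : isoClass s = isoClass t ↔ Iso s t :=
  ⟨fun h ↦ iso_of_children_eq (congrArg children h), Quot.sound⟩

lemma children_injective : Function.Injective children := by
  intro q r h
  obtain ⟨s, rfl⟩ := isoClass_surjective q
  obtain ⟨t, rfl⟩ := isoClass_surjective r
  exact isoClass_eq_iff.2 (iso_of_children_eq h)

/-- The isomorphism classes of hierarchies in which the class `q₀` does not occur as the class of a
subhierarchy, described recursively. -/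
inductive Avoiding (q₀ : IsoClass) : IsoClass → Prop
  | of_children {q : IsoClass} (card_ne_one : (children q).card ≠ 1)
      (children_avoiding : ∀ c ∈ children q, Avoiding q₀ c) (ne : q ≠ q₀) : Avoiding q₀ q

lemma avoiding_isoClass_iff {s t : RTree} :
    Avoiding (isoClass s) (isoClass t) ↔ IsHierarchy t ∧ Avoids t s := by
  induction t using induction_children with
  | node l ih =>
    have hchildren : (∀ c ∈ children (isoClass (.node l)), Avoiding (isoClass s) c) ↔
        ∀ c ∈ l, IsHierarchy c ∧ Avoids c s := by
      simpa [children_isoClass_node] using forall₂_congr ih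
    have hcard : (children (isoClass (.node l))).card = l.length := by
      simp [children_isoClass_node]
    calc Avoiding (isoClass s) (isoClass (.node l))
        ↔ l.length ≠ 1 ∧ (∀ c ∈ l, IsHierarchy c ∧ Avoids c s) ∧ ¬ Iso (.node l) s := by
          rw [← hchildren, ← hcard, ← isoClass_eq_iff]
          exact ⟨fun ⟨h₁, h₂, h₃⟩ ↦ ⟨h₁, h₂, h₃⟩, fun ⟨h₁, h₂, h₃⟩ ↦ ⟨h₁, h₂, h₃⟩⟩
      _ ↔ IsHierarchy (.node l) ∧ Avoids (.node l) s := by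
          rw [isHierarchy_node_iff, avoids_node_iff]
          grind

variable {q₀ : IsoClass} (hcard : (children q₀).card ≠ 1)
  (hchildren : ∀ c ∈ children q₀, Avoiding q₀ c)

include hcard in
lemma card_children_elim_ne_one (o : Option {q // Avoiding q₀ q}) :
    (children (o.elim q₀ Subtype.val)).card ≠ 1 := by
  rcases o with _ | ⟨q, ⟨h, _, _⟩⟩
  exacts [hcard, h]

include hchildren in
lemma avoiding_of_mem_children_elim (o : Option {q // Avoiding q₀ q}) :
    ∀ c ∈ children (o.elim q₀ Subtype.val), Avoiding q₀ c := by
  rcases o with _ | ⟨q, ⟨_, h, _⟩⟩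
  exacts [hchildren, h]

lemma elim_val_injective :
    Function.Injective fun o : Option {q // Avoiding q₀ q} ↦ o.elim q₀ Subtype.val := by
  rintro (_ | ⟨q, ⟨_, _, hq⟩⟩) (_ | ⟨r, ⟨_, _, hr⟩⟩) h
  exacts [rfl, absurd h.symm hr, absurd h hq, congrArg some (Subtype.ext h)]

/-- The children of an avoiding class, or of `q₀` in the case of `none`. -/
def avoidingChildren (o : Option {q // Avoiding q₀ q}) :
    {s : Multiset {q // Avoiding q₀ q} // s.card ≠ 1} :=
  ⟨(children (o.elim q₀ Subtype.val)).pmap Subtype.mk (avoiding_of_mem_children_elim hchildren o),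
    by simpa using card_children_elim_ne_one hcard o⟩

lemma map_val_avoidingChildren (o : Option {q // Avoiding q₀ q}) :
    (avoidingChildren hcard hchildren o).1.map Subtype.val = children (o.elim q₀ Subtype.val) := by
  simp [avoidingChildren, Multiset.map_pmap, Multiset.pmap_eq_map]

lemma avoidingChildren_bijective : Function.Bijective (avoidingChildren hcard hchildren) := by
  refine ⟨fun o o' h ↦ elim_val_injective (children_injective ?_), fun ⟨s, hs⟩ ↦ ?_⟩
  · simp only [← map_val_avoidingChildren hcard hchildren, h]
  · obtain ⟨q, hq⟩ := children_surjective (s.map Subtype.val)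
    have hmap {o : Option {q // Avoiding q₀ q}} (ho : o.elim q₀ Subtype.val = q) :
        avoidingChildren hcard hchildren o = ⟨s, hs⟩ :=
      Subtype.ext <| Multiset.map_injective Subtype.val_injective <|
        (map_val_avoidingChildren hcard hchildren o).trans (ho ▸ hq)
    by_cases h : q = q₀
    · exact ⟨none, hmap h.symm⟩
    · refine ⟨some ⟨q, ?_, ?_, h⟩, hmap rfl⟩
      · rwa [hq, Multiset.card_map]
      · intro c hc
        rw [hq, Multiset.mem_map] at hc
        obtain ⟨a, -, rfl⟩ := hc
        exact a.2

/-- The decomposition of the classes avoiding `q₀` according to the children of the root. -/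
noncomputable def avoidanceDecomposition :
    AvoidanceDecomposition {q // Avoiding q₀ q} (size q₀) where
  size a := size a.1
  children := .ofBijective _ (avoidingChildren_bijective hcard hchildren)
  size_eq o := by
    have hsize : o.elim (size q₀) (fun a ↦ size a.1) = size (o.elim q₀ Subtype.val) := by
      cases o <;> rfl
    rw [hsize, size_eq, ← map_val_avoidingChildren hcard hchildren, Multiset.map_map]
    rfl

end IsoClass

open IsoClass

lemma card_children_isoClass_ne_one {t : RTree} (ht : t.IsHierarchy) :
    (children (isoClass t)).card ≠ 1 := by
  obtain ⟨hl, -⟩ := ht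
  simpa [children_isoClass_node] using hl

lemma avoiding_of_mem_children {t : RTree} (ht : t.IsHierarchy) :
    ∀ c ∈ children (isoClass t), Avoiding (isoClass t) c := by
  obtain ⟨hl, hc⟩ := ht
  intro q hq
  obtain ⟨c, hcl, rfl⟩ := List.mem_map.1 hq
  exact avoiding_isoClass_iff.2 ⟨hc c hcl, avoids_of_leaves_lt (leaves_lt_of_mem hl hcl)⟩

/-- The decomposition of the isomorphism classes of hierarchies avoiding the hierarchy `S`. -/
noncomputable def avoidanceDecomposition {S : RTree} (hS : S.IsHierarchy) :
    AvoidanceDecomposition {q // Avoiding (isoClass S) q} S.leaves :=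
  IsoClass.avoidanceDecomposition (card_children_isoClass_ne_one hS) (avoiding_of_mem_children hS)

lemma avoidCount_eq_card_fiber {S : RTree} (hS : S.IsHierarchy) (n : ℕ) :
    avoidCount S n = Nat.card {q // (avoidanceDecomposition hS).size q = n} := by
  let toClass : (Quot fun a b : {t : RTree // t.IsHierarchy ∧ t.leaves = n ∧ t.Avoids S} ↦
      Iso a.1 b.1) → {q // (avoidanceDecomposition hS).size q = n} :=
    Quot.lift (fun t ↦ ⟨⟨isoClass t.1, avoiding_isoClass_iff.2 ⟨t.2.1, t.2.2.2⟩⟩, t.2.2.1⟩)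
      fun _ _ h ↦ Subtype.ext (Subtype.ext (isoClass_eq_iff.2 h))
  refine Nat.card_congr (.ofBijective toClass ⟨?_, ?_⟩)
  · rintro ⟨a⟩ ⟨b⟩ h
    exact Quot.sound (isoClass_eq_iff.1 (congrArg (fun q ↦ q.1.1) h))
  · rintro ⟨⟨q, hq⟩, hn⟩
    obtain ⟨t, rfl⟩ := isoClass_surjective q
    obtain ⟨hhier, havoid⟩ := avoiding_isoClass_iff.1 hq
    exact ⟨Quot.mk _ ⟨t, hhier, hn, havoid⟩, rfl⟩

end RTree

section Radius

variable {a : ℕ → ℝ} {x : ℝ}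

lemma summable_of_ofReal_lt_radiusOf (hx : 0 ≤ x) (h : ENNReal.ofReal x < radiusOf a) :
    Summable fun n ↦ a n * x ^ n := by
  have hnorm := FormalMultilinearSeries.summable_norm_mul_pow _ h
  refine Summable.of_norm ?_
  simpa [FormalMultilinearSeries.ofScalars_norm, Real.coe_toNNReal _ hx, abs_of_nonneg hx]
    using hnorm

lemma ofReal_le_radiusOf_of_summable (ha : ∀ n, 0 ≤ a n) (hx : 0 ≤ x)
    (h : Summable fun n ↦ a n * x ^ n) : ENNReal.ofReal x ≤ radiusOf a := by
  refine FormalMultilinearSeries.le_radius_of_summable_norm _ ?_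
  simpa [FormalMultilinearSeries.ofScalars_norm, Real.coe_toNNReal _ hx, abs_of_nonneg (ha _)]
    using h

end Radius

namespace AvoidanceDecomposition

variable {A : Type*} {m : ℕ} (D : AvoidanceDecomposition A m) {x : ℝ}

lemma summable_card_fiber_mul_pow_iff_pow_size (hx : 0 ≤ x) :
    (Summable fun n ↦ (Nat.card {a // D.size a = n} : ℝ) * x ^ n) ↔
      Summable fun a ↦ x ^ D.size a :=
  summable_card_fiber_mul_pow_iff
    (finite_fiber_of_summable_pow_size (by norm_num) D.summable_one_tenth_pow_size) hx

/-- The radius of convergence of the power series counting the members of `A` by size. -/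
noncomputable def radius : ENNReal := radiusOf fun n ↦ (Nat.card {a // D.size a = n} : ℝ)

lemma summable_pow_size_of_lt_radius (hx : 0 ≤ x) (h : ENNReal.ofReal x < D.radius) :
    Summable fun a ↦ x ^ D.size a :=
  (D.summable_card_fiber_mul_pow_iff_pow_size hx).1 (summable_of_ofReal_lt_radiusOf hx h)

lemma ofReal_le_radius (hx : 0 ≤ x) (h : Summable fun a ↦ x ^ D.size a) :
    ENNReal.ofReal x ≤ D.radius :=
  ofReal_le_radiusOf_of_summable (fun _ ↦ Nat.cast_nonneg _) hx
    ((D.summable_card_fiber_mul_pow_iff_pow_size hx).2 h)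

lemma radius_ne_top (hm : 2 ≤ m) : D.radius ≠ ⊤ := by
  have hnot : ¬ ENNReal.ofReal (1 / 2) < D.radius := fun h ↦
    (D.lt_half_of_summable hm (D.summable_pow_size_of_lt_radius (by norm_num) h)).ne rfl
  exact ((not_lt.1 hnot).trans_lt ENNReal.ofReal_lt_top).ne

lemma toReal_radius_pos (hm : 2 ≤ m) : 0 < D.radius.toReal := by
  have hle := D.ofReal_le_radius (by norm_num) D.summable_one_tenth_pow_size
  rw [ENNReal.ofReal_le_iff_le_toReal (D.radius_ne_top hm)] at hle
  exact lt_of_lt_of_le (by norm_num) hle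

lemma summable_pow_size_of_lt_toReal_radius (hm : 2 ≤ m) (hx : 0 ≤ x)
    (h : x < D.radius.toReal) : Summable fun a ↦ x ^ D.size a :=
  D.summable_pow_size_of_lt_radius hx
    ((ENNReal.ofReal_lt_iff_lt_toReal hx (D.radius_ne_top hm)).2 h)

lemma le_toReal_radius (hm : 2 ≤ m) (hx : 0 ≤ x) (h : Summable fun a ↦ x ^ D.size a) :
    x ≤ D.radius.toReal :=
  (ENNReal.ofReal_le_iff_le_toReal (D.radius_ne_top hm)).1 (D.ofReal_le_radius hx h)

lemma summable_toReal_radius_pow_size (hm : 2 ≤ m) :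
    Summable fun a ↦ D.radius.toReal ^ D.size a :=
  D.summable_pow_size_of_forall_lt hm (D.toReal_radius_pos hm) fun _ hy ↦
    D.summable_pow_size_of_lt_toReal_radius hm hy.le

theorem exp_logEulerProduct_toReal_radius (hm : 2 ≤ m) :
    Real.exp (logEulerProduct D.size D.radius.toReal) = 2 := by
  have hpos := D.toReal_radius_pos hm
  exact D.exp_logEulerProduct_eq_two hm hpos (D.summable_toReal_radius_pow_size hm) fun y hy hs ↦
    hy.not_ge (D.le_toReal_radius hm (hpos.le.trans hy.le) hs)

end AvoidanceDecomposition

/-- For a hierarchy `S` of size `m ≥ 2` with avoiding counts `H⁽ᵐ⁾ₙ`, radius of convergence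
`ρₘ`, and sum function `H⁽ᵐ⁾(x) = ∑ₙ H⁽ᵐ⁾ₙ xⁿ`, one has
`exp(∑_{k=1}^∞ (1/k) H⁽ᵐ⁾(ρₘ^k)) = 2`. -/
theorem exp_sum_at_radius_eq_two {m : ℕ} (hm : 2 ≤ m) (S : RTree)
    (hS : S.IsHierarchy) (hSm : S.leaves = m) :
    Real.exp (∑' k : ℕ, (1 / ((k : ℝ) + 1)) *
        ∑' n : ℕ, (avoidCount S n : ℝ) *
          (((radiusOf fun n => (avoidCount S n : ℝ)).toReal) ^ (k + 1)) ^ n) = 2 := by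
  subst hSm
  obtain ⟨D, hD⟩ : ∃ D : AvoidanceDecomposition {q // (RTree.isoClass S).Avoiding q} S.leaves,
      ∀ n, avoidCount S n = Nat.card {q // D.size q = n} :=
    ⟨RTree.avoidanceDecomposition hS, RTree.avoidCount_eq_card_fiber hS⟩
  have hs := D.summable_toReal_radius_pow_size hm
  have hmem := D.mem_Ico_of_summable hm ENNReal.toReal_nonneg hs
  have hterm (k : ℕ) : ∑' n, (Nat.card {q // D.size q = n} : ℝ) * (D.radius.toReal ^ (k + 1)) ^ n =
      sizeSeries D.size (D.radius.toReal ^ (k + 1)) :=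
    tsum_card_fiber_mul_pow <| summable_pow_size_of_le (pow_nonneg hmem.1 _)
      (pow_le_of_le_one hmem.1 hmem.2.le k.succ_ne_zero) hs
  have hexp := D.exp_logEulerProduct_toReal_radius hm
  rw [← tsum_sizeSeries_pow_div D.one_le_size hmem hs] at hexp
  simp only [← hterm] at hexp
  simp only [hD]
  exact hexp
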